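/- If the class ℱ = {(i,x) ↦ ψ(√(tᵢ′(x)/tᵢ(x))) : (𝐭,𝐭′)∈S̄²} of functions on 𝒳̄ = ⋃_{i=1}^n {i}×𝒳ᵢ is weak VC-major with dimension at most d ≥ 1, then for every density 𝐬∈𝕃, ε^{S̄}(𝐬) ≤ (11c₀/4)·√(c̄ₙ(d∧n))·[log(en/(d∧n))]^{3/2}, where c₀=1000 and c̄ₙ = 1 + (log 2)/log(en). -/

import Mathlib

open MeasureTheory Real Filter Set
open scoped Classical ENNReal

noncomputable section

/-- Squared Hellinger distance `h²(p·ν, q·ν) = (1/2)∫(√p−√q)² dν` between two densities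
with respect to the reference measure `ν`. -/
def hellSq {X : Type*} [MeasurableSpace X] (ν : Measure X) (p q : X → ℝ) : ℝ :=
  (1 / 2) * ∫ x, (Real.sqrt (p x) - Real.sqrt (q x)) ^ 2 ∂ν

/-- Hellinger-type distance `𝐡` between `n`-tuples of densities:
`𝐡²(𝐭,𝐭′)=Σᵢ h²(tᵢ·μᵢ, tᵢ′·μᵢ)`. -/
def bH {n : ℕ} {𝒳 : Fin n → Type*} [∀ i, MeasurableSpace (𝒳 i)]
    (μ : ∀ i, Measure (𝒳 i)) (t t' : ∀ i, 𝒳 i → ℝ) : ℝ :=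
  Real.sqrt (∑ i, hellSq (μ i) (t i) (t' i))

/-- `ψ(√(b/a))` where `ψ(x)=(x−1)/(x+1)`, `ψ(+∞)=1`, with the conventions
`a/0 = +∞` for `a>0` and `0/0 = 1`. -/
def psiR (a b : ℝ) : ℝ :=
  if a = 0 then (if b = 0 then 0 else 1)
  else (Real.sqrt (b / a) - 1) / (Real.sqrt (b / a) + 1)

/-- `Ψ(𝐱,𝐭,𝐭′) = Σᵢ ψ(√(tᵢ′(xᵢ)/tᵢ(xᵢ)))`. -/
def Psi {n : ℕ} {𝒳 : Fin n → Type*} (x : ∀ i, 𝒳 i) (t t' : ∀ i, 𝒳 i → ℝ) : ℝ :=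
  ∑ i, psiR (t i (x i)) (t' i (x i))

/-- `t` is an `n`-tuple of probability densities with respect to the `μ i`'s, i.e. an
element of `𝕃 = ∏ᵢ ℒᵢ`. -/
def IsDensityT {n : ℕ} {𝒳 : Fin n → Type*} [∀ i, MeasurableSpace (𝒳 i)]
    (μ : ∀ i, Measure (𝒳 i)) (t : ∀ i, 𝒳 i → ℝ) : Prop :=
  ∀ i, Measurable (t i) ∧ (∀ x, 0 ≤ t i x) ∧
    ∫⁻ x, ENNReal.ofReal (t i x) ∂(μ i) = 1

/-- The law `P_𝐬 = ⊗ᵢ (sᵢ·μᵢ)` of `X=(X₁,…,Xₙ)`. -/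
def Plaw {n : ℕ} {𝒳 : Fin n → Type*} [∀ i, MeasurableSpace (𝒳 i)]
    (μ : ∀ i, Measure (𝒳 i)) (s : ∀ i, 𝒳 i → ℝ) : Measure (∀ i, 𝒳 i) :=
  Measure.pi fun i => (μ i).withDensity fun x => ENNReal.ofReal (s i x)

/-- `𝐰^{S̄}(𝐬,y)`: expectation under `P_𝐬` of the supremum of the centred process
`|Ψ(X,𝐭,𝐭′)−E_𝐬Ψ(X,𝐭,𝐭′)|` over pairs `𝐭,𝐭′` in the Hellinger ball of radius `y`
of the countable set `S`, with the convention that the supremum over ∅ is 1. -/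
def wS {n : ℕ} {𝒳 : Fin n → Type*} [∀ i, MeasurableSpace (𝒳 i)]
    (μ : ∀ i, Measure (𝒳 i)) (s : ∀ i, 𝒳 i → ℝ) (S : Set (∀ i, 𝒳 i → ℝ)) (y : ℝ) : ℝ :=
  if Nonempty {p : (∀ i, 𝒳 i → ℝ) × (∀ i, 𝒳 i → ℝ) //
      p.1 ∈ S ∧ p.2 ∈ S ∧ bH μ s p.1 ≤ y ∧ bH μ s p.2 ≤ y} then
    ∫ x, (⨆ p : {p : (∀ i, 𝒳 i → ℝ) × (∀ i, 𝒳 i → ℝ) //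
        p.1 ∈ S ∧ p.2 ∈ S ∧ bH μ s p.1 ≤ y ∧ bH μ s p.2 ≤ y},
      |Psi x p.1.1 p.1.2 - ∫ x', Psi x' p.1.1 p.1.2 ∂(Plaw μ s)|) ∂(Plaw μ s)
  else 1

/-- `ε^{S̄}(𝐬) = sup{y ≥ 1 : 𝐰^{S̄}(𝐬,y) > 6c₀⁻¹y²}` with `c₀ = 1000`. -/
def epsS {n : ℕ} {𝒳 : Fin n → Type*} [∀ i, MeasurableSpace (𝒳 i)]
    (μ : ∀ i, Measure (𝒳 i)) (s : ∀ i, 𝒳 i → ℝ) (S : Set (∀ i, 𝒳 i → ℝ)) : ℝ :=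
  sSup {y : ℝ | 1 ≤ y ∧ 6 / 1000 * y ^ 2 < wS μ s S y}


/-- The class of sets `C` on `𝒴` is VC with dimension at most `d`: every finite set
shattered by `C` has cardinality at most `d`. -/
def VCdimLE {𝒴 : Type*} (C : Set (Set 𝒴)) (d : ℕ) : Prop :=
  ∀ F : Finset 𝒴,
    (∀ A : Finset 𝒴, A ⊆ F → ∃ c ∈ C, ∀ y ∈ F, y ∈ c ↔ y ∈ A) → F.card ≤ d

/-- A class `ℱ` of real-valued functions on `𝒴` is weak VC-major with dimension at
most `d` if for every `u ∈ ℝ` the class of level sets `{f > u}`, `f ∈ ℱ`, is VC on `𝒴`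
with dimension at most `d`. -/
def WeakVCMajorLE {𝒴 : Type*} (ℱ : Set (𝒴 → ℝ)) (d : ℕ) : Prop :=
  ∀ u : ℝ, VCdimLE {B | ∃ f ∈ ℱ, B = {y | u < f y}} d

/-- Rademacher sign attached to a boolean. -/
def sg (b : Bool) : ℝ := if b then 1 else -1

lemma sum_exp_sg {n : ℕ} (A : Finset (Fin n)) (l : ℝ) :
    ∑ ε : Fin n → Bool, Real.exp (l * ∑ i ∈ A, sg (ε i)) ≤
      2 ^ n * Real.exp (l ^ 2 / 2 * A.card) := by
  have h1 : ∀ ε : Fin n → Bool, Real.exp (l * ∑ i ∈ A, sg (ε i)) =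
      ∏ i, (if i ∈ A then Real.exp (l * sg (ε i)) else 1) := by
    intro ε
    rw [Finset.mul_sum, Real.exp_sum, Finset.prod_ite_mem, Finset.univ_inter]
  simp_rw [h1]
  have h2 := Finset.prod_univ_sum (fun _ : Fin n => (Finset.univ : Finset Bool))
    (fun i b => if i ∈ A then Real.exp (l * sg b) else (1 : ℝ))
  rw [Fintype.piFinset_univ] at h2
  rw [← h2]
  have h3 : ∀ i : Fin n, ∑ b : Bool, (if i ∈ A then Real.exp (l * sg b) else (1 : ℝ)) ≤
      2 * (if i ∈ A then Real.exp (l ^ 2 / 2) else 1) := by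
    intro i
    by_cases hi : i ∈ A
    · have := Real.cosh_le_exp_half_sq l
      rw [Real.cosh_eq] at this
      simp only [hi, if_true, Fintype.sum_bool, sg]
      simp
      linarith
    · simp [hi]
  calc _ ≤ ∏ i : Fin n, (2 * (if i ∈ A then Real.exp (l ^ 2 / 2) else 1)) := by
        apply Finset.prod_le_prod
        · intro i _
          apply Finset.sum_nonneg
          intro b _
          split_ifs <;> positivity
        · intro i _; exact h3 i
    _ = _ := by
        rw [Finset.prod_mul_distrib, Finset.prod_ite_mem, Finset.univ_inter]
        simp [← Real.exp_nat_mul, mul_comm]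

lemma massart_aux {n : ℕ} (T : Finset (Finset (Fin n))) (M G : ℝ)
    (hM : ∀ A ∈ T, (A.card : ℝ) ≤ M) (hT : T.Nonempty)
    (hG : Real.log (2 * T.card) ≤ G) (h : (Fin n → Bool) → ℝ)
    (hh : ∀ ε, ∃ A ∈ T, h ε ≤ |∑ i ∈ A, sg (ε i)|) (l : ℝ) (hl : 0 < l) :
    (1 / 2 ^ n) * ∑ ε, h ε ≤ G / l + l * M / 2 := by
  have hT0 : (0 : ℝ) < T.card := by exact_mod_cast hT.card_pos
  have hJ : Real.exp (∑ ε : Fin n → Bool, (1 / 2 ^ n : ℝ) • (l * h ε)) ≤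
      ∑ ε : Fin n → Bool, (1 / 2 ^ n : ℝ) • Real.exp (l * h ε) := by
    apply convexOn_exp.map_sum_le
    · intro i _; positivity
    · simp
    · intro i _; trivial
  have hb : ∀ ε : Fin n → Bool, Real.exp (l * h ε) ≤
      ∑ A ∈ T, (Real.exp (l * ∑ i ∈ A, sg (ε i)) + Real.exp ((-l) * ∑ i ∈ A, sg (ε i))) := by
    intro ε
    obtain ⟨A, hA, hle⟩ := hh ε
    calc _ ≤ Real.exp (l * |∑ i ∈ A, sg (ε i)|) := by gcongr
      _ ≤ Real.exp (l * ∑ i ∈ A, sg (ε i)) + Real.exp ((-l) * ∑ i ∈ A, sg (ε i)) := by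
          rcases abs_cases (∑ i ∈ A, sg (ε i)) with ⟨h1, _⟩ | ⟨h1, _⟩
          · rw [h1]; linarith [Real.exp_pos ((-l) * ∑ i ∈ A, sg (ε i))]
          · rw [h1, mul_neg, ← neg_mul]; linarith [Real.exp_pos (l * ∑ i ∈ A, sg (ε i))]
      _ ≤ _ := Finset.single_le_sum (f := fun A => Real.exp (l * ∑ i ∈ A, sg (ε i)) +
            Real.exp ((-l) * ∑ i ∈ A, sg (ε i))) (fun _ _ => by positivity) hA
  have hs : ∑ ε : Fin n → Bool, Real.exp (l * h ε) ≤
      2 ^ n * (2 * T.card * Real.exp (l ^ 2 / 2 * M)) := by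
    calc _ ≤ _ := Finset.sum_le_sum (fun ε _ => hb ε)
      _ = ∑ A ∈ T, (∑ ε : Fin n → Bool, Real.exp (l * ∑ i ∈ A, sg (ε i)) +
          ∑ ε : Fin n → Bool, Real.exp ((-l) * ∑ i ∈ A, sg (ε i))) := by
          rw [Finset.sum_comm]; simp_rw [Finset.sum_add_distrib]
      _ ≤ ∑ A ∈ T, (2 ^ n * (2 * Real.exp (l ^ 2 / 2 * M))) := by
          apply Finset.sum_le_sum
          intro A hA
          have h1 := sum_exp_sg A l
          have h2 := sum_exp_sg A (-l)
          rw [neg_sq] at h2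
          have h3 : Real.exp (l ^ 2 / 2 * A.card) ≤ Real.exp (l ^ 2 / 2 * M) := by
            have := hM A hA
            gcongr
          have h4 : (2 : ℝ) ^ n * Real.exp (l ^ 2 / 2 * A.card) ≤
            2 ^ n * Real.exp (l ^ 2 / 2 * M) := by gcongr
          linarith
      _ = _ := by rw [Finset.sum_const, nsmul_eq_mul]; ring
  simp only [smul_eq_mul] at hJ
  rw [← Finset.mul_sum, ← Finset.mul_sum, ← Finset.mul_sum] at hJ
  have h5 : Real.exp (1 / 2 ^ n * (l * ∑ ε, h ε)) ≤ 2 * T.card * Real.exp (l ^ 2 / 2 * M) := by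
    refine hJ.trans ?_
    rw [one_div, inv_mul_le_iff₀ (by positivity)]
    exact hs
  have h6 := Real.log_le_log (Real.exp_pos _) h5
  rw [Real.log_exp, Real.log_mul (by positivity) (by positivity), Real.log_exp] at h6
  have h7 : l * (1 / 2 ^ n * ∑ ε, h ε) ≤ G + l ^ 2 / 2 * M := by linarith
  have h8 : 1 / 2 ^ n * ∑ ε, h ε ≤ (G + l ^ 2 / 2 * M) / l := by
    rw [le_div_iff₀ hl]; linarith
  refine h8.trans (le_of_eq ?_)
  field_simp

lemma massart {n : ℕ} (T : Finset (Finset (Fin n))) (M G : ℝ)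
    (hM : ∀ A ∈ T, (A.card : ℝ) ≤ M) (hT : T.Nonempty)
    (hG : Real.log (2 * T.card) ≤ G) (h : (Fin n → Bool) → ℝ)
    (hh : ∀ ε, ∃ A ∈ T, h ε ≤ |∑ i ∈ A, sg (ε i)|) :
    (1 / 2 ^ n) * ∑ ε, h ε ≤ Real.sqrt (2 * G * M) := by
  have hT1 : (1 : ℝ) ≤ T.card := by exact_mod_cast hT.card_pos
  have hG0 : 0 < G := lt_of_lt_of_le (Real.log_pos (by linarith)) hG
  have hM0 : 0 ≤ M := by
    obtain ⟨A, hA⟩ := hT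
    exact le_trans (by positivity) (hM A hA)
  rcases hM0.eq_or_lt with h0 | h0
  · have : ∑ ε, h ε ≤ 0 := by
      apply Finset.sum_nonpos
      intro ε _
      obtain ⟨A, hA, hle⟩ := hh ε
      have hc := hM A hA
      rw [← h0] at hc
      have : A.card = 0 := by exact_mod_cast le_antisymm hc (by positivity)
      rw [Finset.card_eq_zero] at this
      simpa [this] using hle
    refine le_trans ?_ (Real.sqrt_nonneg _)
    apply mul_nonpos_of_nonneg_of_nonpos (by positivity) this
  · refine (massart_aux T M G hM hT hG h hh (Real.sqrt (2 * G * M) / M) (by positivity)).trans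
      (le_of_eq ?_)
    have hp : 0 < Real.sqrt (2 * G * M) := by positivity
    field_simp
    rw [Real.sq_sqrt (by positivity)]; ring

lemma sum_choose_le {n D : ℕ} (hD : 1 ≤ D) (hDn : D ≤ n) :
    (∑ k ∈ Finset.Iic D, (n.choose k : ℝ)) ≤ (Real.exp 1 * n / D) ^ D := by
  have hD0 : (0 : ℝ) < D := by exact_mod_cast hD
  have hn0 : (0 : ℝ) < n := by exact_mod_cast (lt_of_lt_of_le hD hDn)
  have hx0 : (0 : ℝ) < D / n := by positivity
  have hx1 : (D : ℝ) / n ≤ 1 := by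
    rw [div_le_one hn0]; exact_mod_cast hDn
  have h1 : (∑ k ∈ Finset.Iic D, (n.choose k : ℝ)) * ((D : ℝ) / n) ^ D ≤ Real.exp D := by
    calc _ = ∑ k ∈ Finset.Iic D, (n.choose k : ℝ) * ((D : ℝ) / n) ^ D := by
          rw [Finset.sum_mul]
      _ ≤ ∑ k ∈ Finset.Iic D, (n.choose k : ℝ) * ((D : ℝ) / n) ^ k := by
          apply Finset.sum_le_sum
          intro k hk
          rw [Finset.mem_Iic] at hk
          have := pow_le_pow_of_le_one hx0.le hx1 hk
          gcongr
      _ ≤ ∑ k ∈ Finset.range (n + 1), (n.choose k : ℝ) * ((D : ℝ) / n) ^ k := by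
          apply Finset.sum_le_sum_of_subset_of_nonneg
          · intro k hk
            rw [Finset.mem_Iic] at hk
            rw [Finset.mem_range]; omega
          · intros; positivity
      _ = ((D : ℝ) / n + 1) ^ n := by
          rw [add_pow]
          apply Finset.sum_congr rfl
          intro k _
          simp [mul_comm]
      _ ≤ (Real.exp (D / n)) ^ n := by
          gcongr
          exact Real.add_one_le_exp _
      _ = Real.exp D := by
          rw [← Real.exp_nat_mul]; congr 1; field_simp
  have h2 : (Real.exp 1 * n / D) ^ D = Real.exp D / ((D : ℝ) / n) ^ D := by
    rw [div_pow, mul_pow, ← Real.exp_nat_mul, div_pow, mul_one]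
    field_simp
  rw [h2, le_div_iff₀ (by positivity)]
  exact h1

lemma card_traces_le {n d : ℕ} (hn : 0 < n) (hd : 1 ≤ d) (T : Finset (Finset (Fin n)))
    (hT : ∀ F : Finset (Fin n), T.Shatters F → F.card ≤ d) :
    (T.card : ℝ) ≤ (Real.exp 1 * n / (min d n : ℕ)) ^ (min d n) := by
  have hv : T.vcDim ≤ min d n := by
    unfold Finset.vcDim
    apply Finset.sup_le
    intro F hF
    rw [Finset.mem_shatterer] at hF
    exact le_min (hT F hF) (by simpa using Finset.card_le_univ F)
  have h1 := T.card_le_card_shatterer.trans Finset.card_shatterer_le_sum_vcDim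
  rw [Fintype.card_fin] at h1
  have h2 : T.card ≤ ∑ k ∈ Finset.Iic (min d n), n.choose k :=
    h1.trans (Finset.sum_le_sum_of_subset (Finset.Iic_subset_Iic.2 hv))
  refine le_trans ?_ (sum_choose_le (le_min hd hn) (min_le_right d n))
  exact_mod_cast h2

lemma one_le_L {n D : ℕ} (hD : 1 ≤ D) (hDn : D ≤ n) :
    1 ≤ Real.log (Real.exp 1 * n / D) ∧
    Real.log (Real.exp 1 * n / D) = 1 + Real.log n - Real.log D := by
  have hD0 : (0 : ℝ) < D := by exact_mod_cast hD
  have hDn' : (D : ℝ) ≤ n := by exact_mod_cast hDn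
  have hn0 : (0 : ℝ) < n := lt_of_lt_of_le hD0 hDn'
  have : Real.log (Real.exp 1 * n / D) = 1 + Real.log n - Real.log D := by
    rw [Real.log_div (by positivity) (by positivity), Real.log_mul (by positivity) (by positivity),
      Real.log_exp]
  refine ⟨?_, this⟩
  rw [this]
  have := Real.log_le_log hD0 hDn'
  linarith

lemma log_card_le {n D : ℕ} (hD : 1 ≤ D) (hDn : D ≤ n) (N : ℝ) (hN0 : 0 < N)
    (hN : N ≤ (Real.exp 1 * n / D) ^ D) :
    Real.log (2 * N) ≤ (1 + Real.log 2 / Real.log (Real.exp 1 * n)) * D *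
      Real.log (Real.exp 1 * n / D) := by
  obtain ⟨hL1, hL⟩ := one_le_L hD hDn
  have hD1 : (1 : ℝ) ≤ D := by exact_mod_cast hD
  have hD0 : (0 : ℝ) < D := by linarith
  have hDn' : (D : ℝ) ≤ n := by exact_mod_cast hDn
  have hn0 : (0 : ℝ) < n := lt_of_lt_of_le hD0 hDn'
  have hen : Real.log (Real.exp 1 * n) = 1 + Real.log n := by
    rw [Real.log_mul (by positivity) (by positivity), Real.log_exp]
  have hlogn := Real.log_le_log hD0 hDn'
  have hlogD : 0 ≤ Real.log D := Real.log_nonneg hD1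
  have hkey : Real.log (Real.exp 1 * n) ≤ D * Real.log (Real.exp 1 * n / D) := by
    rw [hen, hL]
    have := Real.log_le_sub_one_of_pos hD0
    nlinarith
  have hpos : 0 < Real.log (Real.exp 1 * n) := by rw [hen]; linarith
  have h1 : Real.log N ≤ D * Real.log (Real.exp 1 * n / D) := by
    have := Real.log_le_log hN0 hN
    rwa [Real.log_pow] at this
  rw [Real.log_mul (by norm_num) hN0.ne']
  have h2 : Real.log 2 ≤ Real.log 2 / Real.log (Real.exp 1 * n) *
      (D * Real.log (Real.exp 1 * n / D)) := by
    rw [div_mul_eq_mul_div, le_div_iff₀ hpos]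
    have : 0 ≤ Real.log 2 := Real.log_nonneg (by norm_num)
    gcongr
  linarith

section SupAbs

variable {ι Ω : Type*} {F : ι → Ω → ℝ} {K : ℝ}

/-- Supremum of absolute values of a family of functions. -/
def supAbs (F : ι → Ω → ℝ) (ω : Ω) : ℝ := ⨆ j, |F j ω|

lemma le_supAbs (hF : ∀ j ω, |F j ω| ≤ K) (j : ι) (ω : Ω) : |F j ω| ≤ supAbs F ω :=
  le_ciSup (f := fun j => |F j ω|) ⟨K, by rintro _ ⟨j, rfl⟩; exact hF j ω⟩ j

lemma supAbs_nonneg (ω : Ω) : 0 ≤ supAbs F ω := Real.iSup_nonneg fun _ => abs_nonneg _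

lemma supAbs_le [Nonempty ι] {ω : Ω} {c : ℝ} (h : ∀ j, |F j ω| ≤ c) : supAbs F ω ≤ c := ciSup_le h

lemma measurable_supAbs [Countable ι] [MeasurableSpace Ω] (hF : ∀ j, Measurable (F j)) :
    Measurable (supAbs F) := by
  have : supAbs F = fun ω => ⨆ j, (fun ω => |F j ω|) ω := rfl
  rw [this]
  exact Measurable.iSup fun j => (hF j).abs

lemma integrable_supAbs [Countable ι] [Nonempty ι] [MeasurableSpace Ω] (hF : ∀ j, Measurable (F j))
    (hK : ∀ j ω, |F j ω| ≤ K) (P : Measure Ω) [IsFiniteMeasure P] : Integrable (supAbs F) P := by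
  refine Integrable.of_bound (measurable_supAbs hF).aestronglyMeasurable K ?_
  filter_upwards with ω
  rw [Real.norm_eq_abs, abs_of_nonneg (supAbs_nonneg ω)]
  exact supAbs_le fun j => hK j ω

end SupAbs

lemma mp_integral {α β : Type*} [MeasurableSpace α] [MeasurableSpace β] {μ : Measure α}
    {ν : Measure β} {f : α → β} (h : MeasurePreserving f μ ν) {g : β → ℝ} (hg : Measurable g) :
    ∫ x, g (f x) ∂μ = ∫ y, g y ∂ν := by
  rw [← h.map_eq, integral_map h.measurable.aemeasurable hg.aestronglyMeasurable]

section Symm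

variable {n : ℕ} {𝒳 : Fin n → Type*} [∀ i, MeasurableSpace (𝒳 i)]

lemma mp_split (P : ∀ i, Measure (𝒳 i)) [∀ i, IsProbabilityMeasure (P i)] :
    MeasurePreserving (fun z : ∀ i, 𝒳 i × 𝒳 i => ((fun i => (z i).1), (fun i => (z i).2)))
      (Measure.pi fun i => (P i).prod (P i)) ((Measure.pi P).prod (Measure.pi P)) where
  measurable := by fun_prop
  map_eq := by
    refine (Measure.FiniteSpanningSetsIn.ext ?_ (isPiSystem_pi.prod isPiSystem_pi)
      ((Measure.FiniteSpanningSetsIn.pi fun i ↦ (P i).toFiniteSpanningSetsIn).prod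
      (Measure.FiniteSpanningSetsIn.pi (fun i ↦ (P i).toFiniteSpanningSetsIn))) ?_).symm
    · refine (generateFrom_eq_prod generateFrom_pi generateFrom_pi ?_ ?_).symm
      · exact (Measure.FiniteSpanningSetsIn.pi
          (fun i ↦ (P i).toFiniteSpanningSetsIn)).isCountablySpanning
      · exact (Measure.FiniteSpanningSetsIn.pi
          (fun i ↦ (P i).toFiniteSpanningSetsIn)).isCountablySpanning
    · rintro _ ⟨s, ⟨s, hs, rfl⟩, ⟨_, ⟨t, ht, rfl⟩, rfl⟩⟩
      have hs' : MeasurableSet (univ.pi s) := MeasurableSet.univ_pi fun i => hs i (mem_univ i)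
      have ht' : MeasurableSet (univ.pi t) := MeasurableSet.univ_pi fun i => ht i (mem_univ i)
      rw [Measure.map_apply (by fun_prop) (hs'.prod ht')]
      rw [show (fun z : ∀ i, 𝒳 i × 𝒳 i => ((fun i => (z i).1), (fun i => (z i).2))) ⁻¹'
          (univ.pi s ×ˢ univ.pi t) = (univ.pi fun i ↦ s i ×ˢ t i) by
          ext; simp [Set.mem_pi, forall_and]]
      simp_rw [Measure.prod_prod, Measure.pi_pi, Measure.prod_prod, Finset.prod_mul_distrib]

lemma mp_swap (P : ∀ i, Measure (𝒳 i)) [∀ i, IsProbabilityMeasure (P i)] (ε : Fin n → Bool) :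
    MeasurePreserving (fun (z : ∀ i, 𝒳 i × 𝒳 i) i => if ε i then z i else (z i).swap)
      (Measure.pi fun i => (P i).prod (P i)) (Measure.pi fun i => (P i).prod (P i)) := by
  apply measurePreserving_pi (fun i => (P i).prod (P i)) (fun i => (P i).prod (P i))
    (f := fun i w => if ε i then w else w.swap)
  intro i
  cases ε i
  · simpa using Measure.measurePreserving_swap
  · simpa using! MeasurePreserving.id ((P i).prod (P i))

lemma abs_sum_le_card {f : Fin n → ℝ} {c : ℝ} (h : ∀ i, |f i| ≤ c) : |∑ i, f i| ≤ n * c := by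
  refine (Finset.abs_sum_le_sum_abs _ _).trans ?_
  refine (Finset.sum_le_sum fun i _ => h i).trans ?_
  simp

lemma abs_sg (b : Bool) : |sg b| = 1 := by cases b <;> simp [sg]

lemma symmetrization (P : ∀ i, Measure (𝒳 i)) [∀ i, IsProbabilityMeasure (P i)]
    {ι : Type*} [Countable ι] [Nonempty ι] (a : ι → ∀ i, 𝒳 i → ℝ)
    (ham : ∀ j i, Measurable (a j i)) (hab : ∀ j i x, |a j i x| ≤ 1) (ε : Fin n → Bool) :
    ∫ x, supAbs (fun j (x : ∀ i, 𝒳 i) => ∑ i, (a j i (x i) - ∫ u, a j i u ∂(P i))) x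
        ∂(Measure.pi P) ≤
      2 * ∫ x, supAbs (fun j (x : ∀ i, 𝒳 i) => ∑ i, sg (ε i) * a j i (x i)) x ∂(Measure.pi P) := by
  set Q := Measure.pi P
  set Q2 := Measure.pi fun i => (P i).prod (P i)
  have hintg : ∀ j i, Integrable (a j i) (P i) := fun j i =>
    Integrable.of_bound (ham j i).aestronglyMeasurable 1 (by
      filter_upwards with x; exact hab j i x)
  have hIb : ∀ j i, |∫ u, a j i u ∂(P i)| ≤ 1 := by
    intro j i
    have := norm_integral_le_of_norm_le_const (μ := P i) (f := a j i) (C := 1) (by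
      filter_upwards with x; exact hab j i x)
    simpa using this
  set D : ι → ((∀ i, 𝒳 i) × (∀ i, 𝒳 i)) → ℝ :=
    fun j q => ∑ i, (a j i (q.1 i) - a j i (q.2 i)) with hD
  have hDm : ∀ j, Measurable (D j) := by
    intro j
    apply Finset.measurable_sum
    intro i _
    exact ((ham j i).comp ((measurable_pi_apply i).comp measurable_fst)).sub
      ((ham j i).comp ((measurable_pi_apply i).comp measurable_snd))
  have hDb : ∀ j q, |D j q| ≤ n * 2 := by
    intro j q
    apply abs_sum_le_card
    intro i
    have h1 := abs_le.1 (hab j i (q.1 i))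
    have h2 := abs_le.1 (hab j i (q.2 i))
    rw [abs_le]; constructor <;> linarith
  set E : ι → (∀ i, 𝒳 i) → ℝ := fun j x => ∑ i, (a j i (x i) - ∫ u, a j i u ∂(P i)) with hE
  have hEm : ∀ j, Measurable (E j) := by
    intro j
    apply Finset.measurable_sum
    intro i _
    exact ((ham j i).comp (measurable_pi_apply i)).sub measurable_const
  have hEb : ∀ j q, |E j q| ≤ n * 2 := by
    intro j q
    apply abs_sum_le_card
    intro i
    have h1 := abs_le.1 (hab j i (q i))
    have h2 := abs_le.1 (hIb j i)
    rw [abs_le]; constructor <;> linarith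
  set R : ι → (∀ i, 𝒳 i) → ℝ := fun j x => ∑ i, sg (ε i) * a j i (x i) with hR
  have hRm : ∀ j, Measurable (R j) := by
    intro j
    apply Finset.measurable_sum
    intro i _
    exact ((ham j i).comp (measurable_pi_apply i)).const_mul _
  have hRb : ∀ j q, |R j q| ≤ n * 1 := by
    intro j q
    apply abs_sum_le_card
    intro i
    rw [abs_mul, abs_sg, one_mul]
    exact hab j i (q i)
  -- ghost sample
  have step1 : ∫ x, supAbs E x ∂Q ≤ ∫ q, supAbs D q ∂(Q.prod Q) := by
    rw [integral_prod _ (integrable_supAbs hDm hDb _)]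
    apply integral_mono (integrable_supAbs hEm hEb _)
      ((integrable_supAbs hDm hDb (Q.prod Q)).integral_prod_left)
    intro x
    apply supAbs_le
    intro j
    have hm : ∀ j, Measurable (fun x' => D j (x, x')) := fun j =>
      (hDm j).comp (measurable_const.prodMk measurable_id)
    have heq : E j x = ∫ x', D j (x, x') ∂Q := by
      have hi : ∀ i ∈ (Finset.univ : Finset (Fin n)),
          Integrable (fun x' : ∀ i, 𝒳 i => a j i (x i) - a j i (x' i)) Q := by
        intro i _
        refine (integrable_const _).sub ?_
        exact Integrable.of_bound ((ham j i).comp (measurable_pi_apply i)).aestronglyMeasurable 1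
          (by filter_upwards with x; exact hab j i (x i))
      simp only [hD, hE]
      rw [integral_finsetSum _ hi]
      apply Finset.sum_congr rfl
      intro i _
      have hi1 : Integrable (fun x' : ∀ i, 𝒳 i => a j i (x' i)) Q := Integrable.of_bound
        ((ham j i).comp (measurable_pi_apply i)).aestronglyMeasurable 1
          (by filter_upwards with x; exact hab j i (x i))
      rw [integral_sub (integrable_const _) hi1]
      rw [integral_comp_eval (μ := P) (f := a j i) (ham j i).aestronglyMeasurable]
      simp
    rw [heq]
    refine (abs_integral_le_integral_abs).trans ?_
    have hi2 : Integrable (fun x' => supAbs D (x, x')) Q :=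
      integrable_supAbs (F := fun j x' => D j (x, x')) hm (fun j x' => hDb j (x, x')) Q
    refine integral_mono ?_ hi2 (fun x' => le_supAbs hDb j (x, x'))
    exact (Integrable.of_bound (hm j).aestronglyMeasurable (n * 2)
      (by filter_upwards with x'; exact hDb j (x, x'))).abs
  set H : (∀ i, 𝒳 i × 𝒳 i) → ℝ :=
    fun z => supAbs D ((fun i => (z i).1), (fun i => (z i).2)) with hH
  have hHm : Measurable H := (measurable_supAbs hDm).comp (mp_split P).measurable
  have step2 : ∫ q, supAbs D q ∂(Q.prod Q) = ∫ z, H z ∂Q2 :=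
    (mp_integral (mp_split P) (measurable_supAbs hDm)).symm
  have step3 := mp_integral (mp_swap P ε) hHm
  have mp1 : MeasurePreserving (fun (z : ∀ i, 𝒳 i × 𝒳 i) i => (z i).1) Q2 Q :=
    measurePreserving_pi (fun i => (P i).prod (P i)) P (f := fun i w => w.1)
      fun i => measurePreserving_fst
  have mp2 : MeasurePreserving (fun (z : ∀ i, 𝒳 i × 𝒳 i) i => (z i).2) Q2 Q :=
    measurePreserving_pi (fun i => (P i).prod (P i)) P (f := fun i w => w.2)
      fun i => measurePreserving_snd
  have hRi := integrable_supAbs hRm hRb Q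
  have step4 : ∫ z, H (fun i => if ε i then z i else (z i).swap) ∂Q2 ≤
      ∫ z, (supAbs R (fun i => (z i).1) + supAbs R (fun i => (z i).2)) ∂Q2 := by
    refine integral_mono ?_ ((mp1.integrable_comp_of_integrable hRi).add
      (mp2.integrable_comp_of_integrable hRi)) ?_
    · have : Integrable H Q2 := (mp_split P).integrable_comp_of_integrable
        (integrable_supAbs hDm hDb _)
      exact (mp_swap P ε).integrable_comp_of_integrable this
    · intro z
      apply supAbs_le
      intro j
      have h1 := le_supAbs hRb j (fun i => (z i).1)
      have h2 := le_supAbs hRb j (fun i => (z i).2)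
      refine le_trans ?_ (add_le_add h1 h2)
      refine le_trans (le_of_eq ?_) (abs_sub _ _)
      congr 1
      simp only [hD, hR]
      rw [← Finset.sum_sub_distrib]
      apply Finset.sum_congr rfl
      intro i _
      cases ε i <;> (simp [sg]; try ring)
  have step5 : ∫ z, (supAbs R (fun i => (z i).1) + supAbs R (fun i => (z i).2)) ∂Q2 =
      2 * ∫ x, supAbs R x ∂Q := by
    have e1 : Integrable (fun z : ∀ i, 𝒳 i × 𝒳 i => supAbs R (fun i => (z i).1)) Q2 :=
      mp1.integrable_comp_of_integrable hRi
    have e2 : Integrable (fun z : ∀ i, 𝒳 i × 𝒳 i => supAbs R (fun i => (z i).2)) Q2 :=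
      mp2.integrable_comp_of_integrable hRi
    rw [integral_add e1 e2, mp_integral mp1 (measurable_supAbs hRm),
      mp_integral mp2 (measurable_supAbs hRm)]
    ring
  linarith

end Symm

section SetBound

variable {n : ℕ} {𝒳 : Fin n → Type*} [∀ i, MeasurableSpace (𝒳 i)]

lemma quad_bound {G A W : ℝ} (hG : 0 ≤ G) (hA : 0 ≤ A) (hW : 0 ≤ W)
    (h : G ≤ 2 * Real.sqrt (2 * A * (W + G))) : G ≤ 2 * Real.sqrt (2 * A * W) + 8 * A := by
  set q := Real.sqrt (2 * A * W) with hq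
  have hq0 : 0 ≤ q := Real.sqrt_nonneg _
  have hq2 : q ^ 2 = 2 * A * W := Real.sq_sqrt (by positivity)
  have h2 : Real.sqrt (2 * A * (W + G)) ^ 2 = 2 * A * (W + G) := Real.sq_sqrt (by positivity)
  have h3 : G ^ 2 ≤ 4 * (2 * A * (W + G)) := by
    rw [← h2]; nlinarith [Real.sqrt_nonneg (2 * A * (W + G))]
  by_contra hc
  push Not at hc
  nlinarith [mul_nonneg hq0 hA]

lemma integral_sqrt_le {Ω : Type*} [MeasurableSpace Ω] (P : Measure Ω) [IsProbabilityMeasure P]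
    (f : Ω → ℝ) (hf0 : ∀ ω, 0 ≤ f ω) (hf : Integrable f P)
    (hs : Integrable (fun ω => Real.sqrt (f ω)) P) :
    ∫ ω, Real.sqrt (f ω) ∂P ≤ Real.sqrt (∫ ω, f ω ∂P) := by
  exact Real.strictConcaveOn_sqrt.concaveOn.le_map_integral Real.continuous_sqrt.continuousOn
    isClosed_Ici (by filter_upwards with ω; exact hf0 ω) hf hs

/-- Traces of the sets `B j` on the sample `x`. -/
def traces {ι : Type*} (B : ι → ∀ i, Set (𝒳 i)) (x : ∀ i, 𝒳 i) : Finset (Finset (Fin n)) :=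
  Finset.univ.filter fun A => ∃ j, A = Finset.univ.filter fun i => x i ∈ B j i

/-- The centred empirical process on sets. -/
def empS {ι : Type*} (P : ∀ i, Measure (𝒳 i)) (B : ι → ∀ i, Set (𝒳 i)) (j : ι)
    (x : ∀ i, 𝒳 i) : ℝ :=
  ∑ i, ((B j i).indicator (fun _ => (1 : ℝ)) (x i) - (P i).real (B j i))

lemma abs_ind_le {α : Type*} (s : Set α) (x : α) : |s.indicator (fun _ => (1 : ℝ)) x| ≤ 1 := by
  by_cases h : x ∈ s <;> simp [h]

lemma empS_bound {ι : Type*} (P : ∀ i, Measure (𝒳 i)) [∀ i, IsProbabilityMeasure (P i)]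
    (B : ι → ∀ i, Set (𝒳 i)) (j : ι) (x : ∀ i, 𝒳 i) : |empS P B j x| ≤ n * 2 := by
  apply abs_sum_le_card
  intro i
  have h1 := abs_le.1 (abs_ind_le (B j i) (x i))
  have h2 : (P i).real (B j i) ≤ 1 := measureReal_le_one
  have h3 : 0 ≤ (P i).real (B j i) := measureReal_nonneg
  have h4 : 0 ≤ (B j i).indicator (fun _ => (1 : ℝ)) (x i) :=
    Set.indicator_nonneg (fun _ _ => zero_le_one) _
  rw [abs_le]; constructor <;> linarith

lemma empS_measurable {ι : Type*} (P : ∀ i, Measure (𝒳 i))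
    (B : ι → ∀ i, Set (𝒳 i)) (hB : ∀ j i, MeasurableSet (B j i)) (j : ι) :
    Measurable (empS P B j) := by
  apply Finset.measurable_sum
  intro i _
  exact (((measurable_const.indicator (hB j i))).comp (measurable_pi_apply i)).sub measurable_const

lemma set_bound (P : ∀ i, Measure (𝒳 i)) [∀ i, IsProbabilityMeasure (P i)]
    {ι : Type*} [Countable ι] [Nonempty ι] (B : ι → ∀ i, Set (𝒳 i))
    (hB : ∀ j i, MeasurableSet (B j i)) (W G : ℝ) (hW0 : 0 ≤ W)
    (hW : ∀ j, ∑ i, (P i).real (B j i) ≤ W)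
    (hG : ∀ x, Real.log (2 * (traces B x).card) ≤ G) :
    ∫ x, supAbs (empS P B) x ∂(Measure.pi P) ≤ 2 * Real.sqrt (2 * G * W) + 8 * G := by
  set Q := Measure.pi P
  have hne : ∀ x, (traces B x).Nonempty := by
    intro x
    refine ⟨Finset.univ.filter fun i => x i ∈ B (Classical.arbitrary ι) i, ?_⟩
    simp only [traces, Finset.mem_filter, Finset.mem_univ, true_and]
    exact ⟨_, rfl⟩
  have hEm := empS_measurable P B hB
  have hEb := empS_bound P B
  have hEi := integrable_supAbs hEm hEb Q
  have hG0 : 0 ≤ G := by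
    obtain ⟨x⟩ : Nonempty (∀ i, 𝒳 i) := by
      have : ∀ i, Nonempty (𝒳 i) := fun i => nonempty_of_isProbabilityMeasure (P i)
      infer_instance
    refine le_trans (Real.log_nonneg ?_) (hG x)
    have : (1 : ℝ) ≤ (traces B x).card := by exact_mod_cast (hne x).card_pos
    linarith
  set a : ι → ∀ i, 𝒳 i → ℝ := fun j i => (B j i).indicator (fun _ => (1 : ℝ)) with ha
  have ham : ∀ j i, Measurable (a j i) := fun j i => measurable_const.indicator (hB j i)
  have hab : ∀ j i x, |a j i x| ≤ 1 := fun j i x => abs_ind_le _ _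
  set R : (Fin n → Bool) → ι → (∀ i, 𝒳 i) → ℝ :=
    fun ε j x => ∑ i, sg (ε i) * a j i (x i) with hR
  have hRm : ∀ ε j, Measurable (R ε j) := by
    intro ε j
    apply Finset.measurable_sum
    intro i _
    exact ((ham j i).comp (measurable_pi_apply i)).const_mul _
  have hRb : ∀ ε j q, |R ε j q| ≤ n * 1 := by
    intro ε j q
    apply abs_sum_le_card
    intro i
    rw [abs_mul, abs_sg, one_mul]
    exact hab j i (q i)
  have hRi : ∀ ε, Integrable (supAbs (R ε)) Q := fun ε => integrable_supAbs (hRm ε) (hRb ε) Q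
  have hintg : ∀ j i, ∫ u, a j i u ∂(P i) = (P i).real (B j i) := by
    intro j i
    simp only [ha]
    rw [integral_indicator_const _ (hB j i)]; simp
  have hsym : ∀ ε, ∫ x, supAbs (empS P B) x ∂Q ≤ 2 * ∫ x, supAbs (R ε) x ∂Q := by
    intro ε
    have := symmetrization P a ham hab ε
    simp_rw [hintg] at this
    exact this
  have havg : ∫ x, supAbs (empS P B) x ∂Q ≤
      2 * ∫ x, (1 / 2 ^ n) * ∑ ε, supAbs (R ε) x ∂Q := by
    rw [integral_const_mul, integral_finsetSum _ (fun ε _ => hRi ε)]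
    have h1 : ∑ _ε : Fin n → Bool, ∫ x, supAbs (empS P B) x ∂Q ≤
        ∑ ε : Fin n → Bool, 2 * ∫ x, supAbs (R ε) x ∂Q :=
      Finset.sum_le_sum fun ε _ => hsym ε
    rw [Finset.sum_const, ← Finset.mul_sum] at h1
    simp only [Finset.card_univ, Fintype.card_fun, Fintype.card_bool, Fintype.card_fin,
      nsmul_eq_mul, Nat.cast_pow, Nat.cast_ofNat] at h1
    have h2 : (0 : ℝ) < 2 ^ n := by positivity
    rw [one_div, mul_left_comm, le_inv_mul_iff₀ h2]
    exact h1
  have hmass : ∀ x, (1 / 2 ^ n) * ∑ ε, supAbs (R ε) x ≤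
      Real.sqrt (2 * G * (W + supAbs (empS P B) x)) := by
    intro x
    have hsum : ∀ j, ∑ i, a j i (x i) =
        ((Finset.univ.filter fun i => x i ∈ B j i).card : ℝ) := by
      intro j
      rw [Finset.card_filter]
      push_cast
      apply Finset.sum_congr rfl
      intro i _
      simp [ha, Set.indicator_apply]
    refine massart (traces B x) _ G ?_ (hne x) (hG x) _ ?_
    · intro A hA
      simp only [traces, Finset.mem_filter, Finset.mem_univ, true_and] at hA
      obtain ⟨j, rfl⟩ := hA
      have h1 := le_supAbs hEb j x
      have h2 := (abs_le.1 h1).2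
      have h5 : empS P B j x = ∑ i, a j i (x i) - ∑ i, (P i).real (B j i) := by
        unfold empS
        rw [Finset.sum_sub_distrib]
      have h3 := hW j
      rw [← hsum j]
      linarith
    · intro ε
      obtain ⟨A, hA, hmax⟩ := Finset.exists_max_image (traces B x)
        (fun A => |∑ i ∈ A, sg (ε i)|) (hne x)
      refine ⟨A, hA, supAbs_le ?_⟩
      intro j
      have := hmax (Finset.univ.filter fun i => x i ∈ B j i) (by
        simp only [traces, Finset.mem_filter, Finset.mem_univ, true_and]
        exact ⟨j, rfl⟩)
      refine le_trans (le_of_eq ?_) this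
      congr 1
      simp only [hR]
      rw [Finset.sum_filter]
      apply Finset.sum_congr rfl
      intro i _
      simp [ha, Set.indicator_apply]
  set g := ∫ x, supAbs (empS P B) x ∂Q with hg
  have hg0 : 0 ≤ g := integral_nonneg fun x => supAbs_nonneg x
  have hfi : Integrable (fun x => 2 * G * (W + supAbs (empS P B) x)) Q :=
    ((integrable_const W).add hEi).const_mul _
  have hf0 : ∀ x, 0 ≤ 2 * G * (W + supAbs (empS P B) x) := by
    intro x
    have := supAbs_nonneg (F := empS P B) x
    positivity
  have hsi : Integrable (fun x => Real.sqrt (2 * G * (W + supAbs (empS P B) x))) Q := by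
    refine Integrable.of_bound (hfi.aestronglyMeasurable.aemeasurable.sqrt.aestronglyMeasurable)
      (Real.sqrt (2 * G * (W + n * 2))) ?_
    filter_upwards with x
    rw [Real.norm_eq_abs, abs_of_nonneg (Real.sqrt_nonneg _)]
    have : supAbs (empS P B) x ≤ n * 2 := supAbs_le fun j => hEb j x
    gcongr
  apply quad_bound hg0 hG0 hW0
  refine havg.trans ?_
  have h1 : ∫ x, (1 / 2 ^ n) * ∑ ε, supAbs (R ε) x ∂Q ≤
      ∫ x, Real.sqrt (2 * G * (W + supAbs (empS P B) x)) ∂Q :=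
    integral_mono ((integrable_finsetSum _ fun ε _ => hRi ε).const_mul _) hsi hmass
  have h2 := integral_sqrt_le Q _ hf0 hfi hsi
  rw [integral_const_mul, integral_add (integrable_const W) hEi] at h2
  simp only [integral_const, probReal_univ, one_smul] at h2
  linarith

end SetBound

lemma psiR_eq {a b : ℝ} (ha : 0 ≤ a) (hb : 0 ≤ b) :
    psiR a b = (Real.sqrt b - Real.sqrt a) / (Real.sqrt b + Real.sqrt a) := by
  unfold psiR
  by_cases h : a = 0
  · by_cases h' : b = 0
    · simp [h, h']
    · have : Real.sqrt b ≠ 0 := by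
        rw [Real.sqrt_ne_zero']; exact lt_of_le_of_ne hb (Ne.symm h')
      simp [h, h', this]
  · have h0 : 0 < Real.sqrt a := Real.sqrt_pos.2 (lt_of_le_of_ne ha (Ne.symm h))
    have h1 : 0 ≤ Real.sqrt b := Real.sqrt_nonneg b
    rw [if_neg h, Real.sqrt_div hb]
    have h2 : Real.sqrt b / Real.sqrt a + 1 ≠ 0 := by positivity
    have h3 : Real.sqrt b + Real.sqrt a ≠ 0 := by positivity
    field_simp

lemma psiR_swap {a b : ℝ} (ha : 0 ≤ a) (hb : 0 ≤ b) : psiR b a = - psiR a b := by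
  rw [psiR_eq ha hb, psiR_eq hb ha, add_comm (Real.sqrt a), ← neg_div, neg_sub]

lemma abs_psiR_le {a b : ℝ} (ha : 0 ≤ a) (hb : 0 ≤ b) : |psiR a b| ≤ 1 := by
  rw [psiR_eq ha hb, abs_div]
  have h1 := Real.sqrt_nonneg a
  have h2 := Real.sqrt_nonneg b
  apply div_le_one_of_le₀ _ (abs_nonneg _)
  rw [abs_of_nonneg (add_nonneg h2 h1), abs_le]
  constructor <;> linarith

lemma psiR_sq_le {a b s : ℝ} (ha : 0 ≤ a) (hb : 0 ≤ b) (hs : 0 ≤ s) :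
    s * psiR a b ^ 2 ≤ 2 * (Real.sqrt s - Real.sqrt a) ^ 2 +
      2 * (Real.sqrt s - Real.sqrt b) ^ 2 := by
  have h1 := abs_psiR_le ha hb
  rw [psiR_eq ha hb] at h1 ⊢
  have hs2 : s = Real.sqrt s ^ 2 := (Real.sq_sqrt hs).symm
  have hr0 := Real.sqrt_nonneg s
  have ha0 := Real.sqrt_nonneg a
  have hb0 := Real.sqrt_nonneg b
  generalize Real.sqrt a = α at *
  generalize Real.sqrt b = β at *
  generalize Real.sqrt s = r at *
  subst hs2
  by_cases h : r ≤ α + β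
  · have h3 : r ^ 2 * ((β - α) / (β + α)) ^ 2 ≤ (β - α) ^ 2 := by
      rcases (add_nonneg hb0 ha0).eq_or_lt with h0 | h0
      · rw [← h0]; simp; positivity
      · rw [div_pow, mul_div_assoc', div_le_iff₀ (by positivity), mul_comm]
        have : r ^ 2 ≤ (β + α) ^ 2 := by gcongr; linarith
        gcongr
    nlinarith [sq_nonneg (2 * r - α - β)]
  · push Not at h
    have h3 : ((β - α) / (β + α)) ^ 2 ≤ 1 := by
      rw [← sq_abs]; exact pow_le_one₀ (abs_nonneg _) h1
    have h4 : r ^ 2 * ((β - α) / (β + α)) ^ 2 ≤ r ^ 2 * 1 := by gcongr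
    nlinarith [sq_nonneg (α - β)]

lemma psiR_measurable {X : Type*} [MeasurableSpace X] {t t' : X → ℝ} (ht : Measurable t)
    (ht' : Measurable t') (h0 : ∀ x, 0 ≤ t x) (h0' : ∀ x, 0 ≤ t' x) :
    Measurable (fun x => psiR (t x) (t' x)) := by
  have : (fun x => psiR (t x) (t' x)) = fun x =>
      (Real.sqrt (t' x) - Real.sqrt (t x)) / (Real.sqrt (t' x) + Real.sqrt (t x)) := by
    funext x; exact psiR_eq (h0 x) (h0' x)
  rw [this]
  exact (ht'.sqrt.sub ht.sqrt).div (ht'.sqrt.add ht.sqrt)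

lemma count_pos {m : ℕ} {v : ℝ} (h0 : 0 ≤ v) (hm : v ≤ m) :
    |v - ∑ k ∈ Finset.Icc 1 m, (if (k : ℝ) < v then (1 : ℝ) else 0)| ≤ 1 := by
  have h1 : ∑ k ∈ Finset.Icc 1 m, (if (k : ℝ) < v then (1 : ℝ) else 0) = (⌈v⌉₊ - 1 : ℕ) := by
    rw [Finset.sum_ite, Finset.sum_const_zero, add_zero, Finset.sum_const, nsmul_eq_mul, mul_one]
    congr 1
    rw [← Nat.card_Ico]
    congr 1
    ext k
    have := Nat.ceil_le.2 hm
    simp only [Finset.mem_filter, Finset.mem_Icc, Finset.mem_Ico, Nat.lt_ceil]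
    constructor
    · rintro ⟨⟨a, b⟩, c⟩; exact ⟨a, c⟩
    · rintro ⟨a, c⟩
      have := Nat.lt_ceil.2 c
      exact ⟨⟨a, by omega⟩, c⟩
  rw [h1]
  rcases h0.eq_or_lt with h | h
  · simp [← h]
  · have h2 := Nat.ceil_lt_add_one h0
    have h3 := Nat.le_ceil v
    have h4 : 1 ≤ ⌈v⌉₊ := Nat.one_le_ceil_iff.2 h
    push_cast [h4]
    rw [abs_le]; constructor <;> linarith

lemma count_neg {m : ℕ} {v : ℝ} (h0 : v ≤ 0) :
    ∑ k ∈ Finset.Icc 1 m, (if (k : ℝ) < v then (1 : ℝ) else 0) = 0 := by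
  apply Finset.sum_eq_zero
  intro k _
  rw [if_neg]
  have : (0 : ℝ) ≤ k := by positivity
  linarith

lemma count_approx {m : ℕ} (hm : 0 < m) {v : ℝ} (hv : |v| ≤ 1) :
    |v - (1 / m) * ∑ k ∈ Finset.Icc 1 m, ((if (k : ℝ) / m < v then (1 : ℝ) else 0) -
      (if (k : ℝ) / m < -v then (1 : ℝ) else 0))| ≤ 1 / m := by
  have hm0 : (0 : ℝ) < m := by exact_mod_cast hm
  have hv' := abs_le.1 hv
  simp_rw [div_lt_iff₀ hm0]
  rw [Finset.sum_sub_distrib]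
  have key : |v * m - (∑ k ∈ Finset.Icc 1 m, (if (k : ℝ) < v * m then (1 : ℝ) else 0) -
      ∑ k ∈ Finset.Icc 1 m, (if (k : ℝ) < -v * m then (1 : ℝ) else 0))| ≤ 1 := by
    rcases le_total 0 v with h | h
    · rw [count_neg (v := -v * m) (by nlinarith), sub_zero]
      exact count_pos (by positivity) (by nlinarith)
    · rw [count_neg (v := v * m) (by nlinarith), zero_sub, sub_neg_eq_add]
      have := count_pos (m := m) (v := -v * m) (by nlinarith) (by nlinarith)
      rw [← abs_neg] at this
      convert this using 2
      ring
  have e : ∀ z : ℝ, v - 1 / m * z = (1 / m) * (v * m - z) := by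
    intro z; field_simp
  rw [e, abs_mul, abs_of_pos (by positivity : (0 : ℝ) < 1 / m)]
  have : (0 : ℝ) < 1 / m := by positivity
  nlinarith

lemma isProb_withDensity {X : Type*} [MeasurableSpace X] (ν : Measure X) {s : X → ℝ}
    (h : ∫⁻ x, ENNReal.ofReal (s x) ∂ν = 1) :
    IsProbabilityMeasure (ν.withDensity fun x => ENNReal.ofReal (s x)) :=
  ⟨by rw [withDensity_apply _ MeasurableSet.univ, Measure.restrict_univ, h]⟩

lemma integrable_density {X : Type*} [MeasurableSpace X] (ν : Measure X) {s : X → ℝ}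
    (hm : Measurable s) (h0 : ∀ x, 0 ≤ s x) (h : ∫⁻ x, ENNReal.ofReal (s x) ∂ν = 1) :
    Integrable s ν := by
  refine ⟨hm.aestronglyMeasurable, ?_⟩
  rw [hasFiniteIntegral_iff_ofReal (by filter_upwards with x; exact h0 x), h]
  exact ENNReal.one_lt_top

lemma integrable_hell {X : Type*} [MeasurableSpace X] (ν : Measure X) {s t : X → ℝ}
    (hs : Integrable s ν) (ht : Integrable t ν) (hsm : Measurable s) (htm : Measurable t)
    (hs0 : ∀ x, 0 ≤ s x) (ht0 : ∀ x, 0 ≤ t x) :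
    Integrable (fun x => (Real.sqrt (s x) - Real.sqrt (t x)) ^ 2) ν := by
  refine (hs.add ht).mono' ((hsm.sqrt.sub htm.sqrt).pow_const 2).aestronglyMeasurable ?_
  filter_upwards with x
  rw [Real.norm_eq_abs, abs_of_nonneg (sq_nonneg _)]
  have h1 := Real.sq_sqrt (hs0 x)
  have h2 := Real.sq_sqrt (ht0 x)
  have h3 := mul_nonneg (Real.sqrt_nonneg (s x)) (Real.sqrt_nonneg (t x))
  simp only [Pi.add_apply]
  nlinarith

lemma second_moment {X : Type*} [MeasurableSpace X] (ν : Measure X) {s t t' : X → ℝ}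
    (hs : Measurable s ∧ (∀ x, 0 ≤ s x) ∧ ∫⁻ x, ENNReal.ofReal (s x) ∂ν = 1)
    (ht : Measurable t ∧ (∀ x, 0 ≤ t x) ∧ ∫⁻ x, ENNReal.ofReal (t x) ∂ν = 1)
    (ht' : Measurable t' ∧ (∀ x, 0 ≤ t' x) ∧ ∫⁻ x, ENNReal.ofReal (t' x) ∂ν = 1) :
    ∫ x, psiR (t x) (t' x) ^ 2 ∂(ν.withDensity fun x => ENNReal.ofReal (s x)) ≤
      4 * hellSq ν s t + 4 * hellSq ν s t' := by
  obtain ⟨hsm, hs0, hs1⟩ := hs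
  obtain ⟨htm, ht0, ht1⟩ := ht
  obtain ⟨htm', ht0', ht1'⟩ := ht'
  have is := integrable_density ν hsm hs0 hs1
  have it := integrable_density ν htm ht0 ht1
  have it' := integrable_density ν htm' ht0' ht1'
  have h1 := integrable_hell ν is it hsm htm hs0 ht0
  have h2 := integrable_hell ν is it' hsm htm' hs0 ht0'
  have hpm := psiR_measurable htm htm' ht0 ht0'
  rw [integral_withDensity_eq_integral_toReal_smul hsm.ennreal_ofReal
    (by filter_upwards with x; exact ENNReal.ofReal_lt_top)]
  have h3 : ∫ x, (ENNReal.ofReal (s x)).toReal • psiR (t x) (t' x) ^ 2 ∂ν ≤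
      ∫ x, (2 * (Real.sqrt (s x) - Real.sqrt (t x)) ^ 2 +
        2 * (Real.sqrt (s x) - Real.sqrt (t' x)) ^ 2) ∂ν := by
    apply integral_mono_of_nonneg
    · filter_upwards with x
      simp only [Pi.zero_apply, smul_eq_mul]
      positivity
    · exact (h1.const_mul 2).add (h2.const_mul 2)
    · filter_upwards with x
      rw [ENNReal.toReal_ofReal (hs0 x), smul_eq_mul]
      exact psiR_sq_le (ht0 x) (ht0' x) (hs0 x)
  refine h3.trans (le_of_eq ?_)
  rw [integral_add (h1.const_mul 2) (h2.const_mul 2), integral_const_mul, integral_const_mul]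
  unfold hellSq
  ring

lemma markov_sq {X : Type*} [MeasurableSpace X] (P : Measure X) [IsProbabilityMeasure P]
    {f : X → ℝ} (hf : Measurable f) (hb : ∀ x, |f x| ≤ 1) {u : ℝ} (hu : 0 < u) :
    P.real {x | u < f x} ≤ (∫ x, f x ^ 2 ∂P) / u ^ 2 := by
  have hi : Integrable (fun x => f x ^ 2) P := by
    refine Integrable.of_bound (hf.pow_const 2).aestronglyMeasurable 1 ?_
    filter_upwards with x
    rw [norm_pow]
    exact pow_le_one₀ (norm_nonneg _) (hb x)
  have h1 := mul_meas_ge_le_integral_of_nonneg (μ := P) (f := fun x => f x ^ 2)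
    (by filter_upwards with x; exact sq_nonneg _) hi (u ^ 2)
  rw [le_div_iff₀ (by positivity), mul_comm]
  refine le_trans ?_ h1
  have : P.real {x | u < f x} ≤ P.real {x | u ^ 2 ≤ f x ^ 2} := by
    refine measureReal_mono ?_ (measure_ne_top _ _)
    intro x hx
    have hx' : u < f x := hx
    show u ^ 2 ≤ f x ^ 2
    gcongr
  gcongr

lemma traces_shatter {n : ℕ} {𝒳 : Fin n → Type*} {ι : Type*} (f : ι → ∀ i, 𝒳 i → ℝ)
    (ℱ : Set ((Σ i : Fin n, 𝒳 i) → ℝ)) (hf : ∀ j, (fun p : Σ i : Fin n, 𝒳 i => f j p.1 p.2) ∈ ℱ)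
    {d : ℕ} (hVC : WeakVCMajorLE ℱ d) (u : ℝ) (x : ∀ i, 𝒳 i) (F : Finset (Fin n))
    (hF : (traces (fun j i => {y | u < f j i y}) x).Shatters F) : F.card ≤ d := by
  have hinj : Function.Injective (fun i : Fin n => (⟨i, x i⟩ : Σ i : Fin n, 𝒳 i)) := by
    intro i j h
    exact (Sigma.mk.inj_iff.1 h).1
  have := hVC u (F.image fun i => (⟨i, x i⟩ : Σ i : Fin n, 𝒳 i)) ?_
  · rwa [Finset.card_image_of_injective _ hinj] at this
  · intro A hA
    obtain ⟨U, hU, hFU⟩ := hF (t := F.filter fun i => (⟨i, x i⟩ : Σ i : Fin n, 𝒳 i) ∈ A)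
      (Finset.filter_subset _ _)
    simp only [traces, Finset.mem_filter, Finset.mem_univ, true_and] at hU
    obtain ⟨j, rfl⟩ := hU
    refine ⟨_, ⟨_, hf j, rfl⟩, ?_⟩
    intro y hy
    rw [Finset.mem_image] at hy
    obtain ⟨i, hi, rfl⟩ := hy
    have h1 := Finset.ext_iff.1 hFU i
    simp only [Finset.mem_inter, Finset.mem_filter, Finset.mem_univ, true_and, hi,
      Set.mem_ofPred_eq] at h1
    simpa using h1

lemma sum_inv_le {n D : ℕ} (hD : 1 ≤ D) (hDn : D ≤ n) :
    ∑ k ∈ Finset.Icc 1 (n / D), (1 / (k : ℝ)) ≤ Real.log (Real.exp 1 * n / D) := by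
  have h := harmonic_le_one_add_log (n / D)
  rw [harmonic_eq_sum_Icc] at h
  push_cast at h
  simp_rw [one_div]
  refine h.trans ?_
  obtain ⟨_, hL⟩ := one_le_L hD hDn
  have hD0 : (0 : ℝ) < D := by exact_mod_cast hD
  have hn0 : (0 : ℝ) < n := by exact_mod_cast (lt_of_lt_of_le hD hDn)
  rw [hL]
  have hm : 0 < n / D := Nat.div_pos hDn hD
  have h1 : Real.log ((n / D : ℕ) : ℝ) ≤ Real.log (n / D) :=
    Real.log_le_log (by exact_mod_cast hm) Nat.cast_div_le
  rw [Real.log_div hn0.ne' hD0.ne'] at h1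
  linarith

lemma n_div_m_le {n D : ℕ} (hD : 1 ≤ D) (hDn : D ≤ n) :
    (n : ℝ) / (n / D : ℕ) ≤ 2 * D := by
  have hm : 0 < n / D := Nat.div_pos hDn hD
  rw [div_le_iff₀ (by exact_mod_cast hm)]
  have h1 := Nat.div_add_mod n D
  have h2 := Nat.mod_lt n hD
  have h3 : n ≤ 2 * D * (n / D) := by nlinarith
  exact_mod_cast h3

lemma final_numeric {c D L G y w : ℝ} (hc : 1 ≤ c) (hD : 1 ≤ D) (hL : 1 ≤ L)
    (hG : G = c * D * L)
    (hy : (11 * 1000 / 4) * Real.sqrt (c * D) * L ^ ((3 : ℝ) / 2) < y)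
    (hw : w ≤ max 1 (16 * y * Real.sqrt G * L + 16 * G + 4 * D)) : w ≤ 6 / 1000 * y ^ 2 := by
  have hL32 : L ^ ((3 : ℝ) / 2) = L * Real.sqrt L := by
    rw [show (3 : ℝ) / 2 = 1 + 1 / 2 by norm_num, Real.rpow_add (by linarith), Real.rpow_one,
      ← Real.sqrt_eq_rpow]
  have hGs : Real.sqrt G = Real.sqrt (c * D) * Real.sqrt L := by
    rw [hG, Real.sqrt_mul (by positivity)]
  rw [hL32] at hy
  rw [hGs] at hw
  have hcD : 1 ≤ c * D := by nlinarith
  have hq2 : Real.sqrt (c * D) ^ 2 = c * D := Real.sq_sqrt (by linarith)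
  have hl2 : Real.sqrt L ^ 2 = L := Real.sq_sqrt (by linarith)
  have hq1 : 1 ≤ Real.sqrt (c * D) := Real.one_le_sqrt.2 hcD
  have hl1 : 1 ≤ Real.sqrt L := Real.one_le_sqrt.2 hL
  set q := Real.sqrt (c * D)
  set l := Real.sqrt L
  set z := q * (L * l) with hz
  have hLl : 1 ≤ L * l := by nlinarith
  have hz1 : 1 ≤ z := by nlinarith
  have hyz : 2750 * z < y := by rw [hz]; linarith
  have hz2 : z ^ 2 = (c * D) * L ^ 3 := by
    rw [hz, mul_pow, mul_pow, hq2, hl2]; ring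
  have hG2 : G ≤ z ^ 2 := by
    rw [hz2, hG]
    have : L ≤ L ^ 3 := le_self_pow₀ hL (by norm_num)
    gcongr
  have hD2 : D ≤ z ^ 2 := by
    rw [hz2]
    have : 1 ≤ L ^ 3 := one_le_pow₀ hL
    nlinarith
  have e : 16 * y * (q * l) * L = 16 * y * z := by rw [hz]; ring
  rw [e] at hw
  refine hw.trans (max_le ?_ ?_)
  · nlinarith
  · nlinarith

lemma wS_bound
    {n : ℕ} {𝒳 : Fin n → Type*} [∀ i, MeasurableSpace (𝒳 i)]
    (μ : ∀ i, Measure (𝒳 i))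
    (hn : 0 < n)
    (Sbar S : Set (∀ i, 𝒳 i → ℝ))
    (hmodel : ∀ t ∈ Sbar, IsDensityT μ t)
    (hSsub : S ⊆ Sbar) (hScount : S.Countable)
    (d : ℕ) (hd : 1 ≤ d)
    (hVC : WeakVCMajorLE
      {f : (Σ i : Fin n, 𝒳 i) → ℝ |
        ∃ t ∈ Sbar, ∃ t' ∈ Sbar, f = fun p => psiR (t p.1 p.2) (t' p.1 p.2)} d)
    (s : ∀ i, 𝒳 i → ℝ) (hs : IsDensityT μ s) (y : ℝ) (hy : 1 ≤ y) (G : ℝ)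
    (hGdef : G = (1 + Real.log 2 / Real.log (Real.exp 1 * n)) * (min d n : ℕ) *
      Real.log (Real.exp 1 * n / (min d n : ℕ))) :
    wS μ s S y ≤ max 1 (16 * y * Real.sqrt G * Real.log (Real.exp 1 * n / (min d n : ℕ)) +
      16 * G + 4 * (min d n : ℕ)) := by
  unfold wS
  split_ifs with hne
  swap
  · exact le_max_left _ _
  refine le_trans ?_ (le_max_right _ _)
  have hD1 : 1 ≤ min d n := le_min hd hn
  have hDn : min d n ≤ n := min_le_right d n
  set D := min d n with hDdef
  set L := Real.log (Real.exp 1 * n / D) with hLdef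
  set ι := {p : (∀ i, 𝒳 i → ℝ) × (∀ i, 𝒳 i → ℝ) //
      p.1 ∈ S ∧ p.2 ∈ S ∧ bH μ s p.1 ≤ y ∧ bH μ s p.2 ≤ y} with hι
  have hcount : Countable ι := by
    have : ({p : (∀ i, 𝒳 i → ℝ) × (∀ i, 𝒳 i → ℝ) |
      p.1 ∈ S ∧ p.2 ∈ S ∧ bH μ s p.1 ≤ y ∧ bH μ s p.2 ≤ y}).Countable := by
      have h2 : (S ×ˢ S).Countable := hScount.prod hScount
      refine h2.mono ?_
      intro p hp
      exact Set.mem_prod.2 ⟨hp.1, hp.2.1⟩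
    exact this.to_subtype
  set P : ∀ i, Measure (𝒳 i) := fun i => (μ i).withDensity fun x => ENNReal.ofReal (s i x)
    with hP
  have hPprob : ∀ i, IsProbabilityMeasure (P i) := fun i => isProb_withDensity (μ i) (hs i).2.2
  have hlaw : Plaw μ s = Measure.pi P := rfl
  rw [hlaw]
  set Q := Measure.pi P with hQ
  have hd1 : ∀ p : ι, IsDensityT μ p.1.1 := fun p => hmodel _ (hSsub p.2.1)
  have hd2 : ∀ p : ι, IsDensityT μ p.1.2 := fun p => hmodel _ (hSsub p.2.2.1)
  set f : ι → ∀ i, 𝒳 i → ℝ := fun p i x => psiR (p.1.1 i x) (p.1.2 i x) with hf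
  have hfm : ∀ p i, Measurable (f p i) := fun p i =>
    psiR_measurable (hd1 p i).1 (hd2 p i).1 (hd1 p i).2.1 (hd2 p i).2.1
  have hfb : ∀ p i x, |f p i x| ≤ 1 := fun p i x =>
    abs_psiR_le ((hd1 p i).2.1 x) ((hd2 p i).2.1 x)
  set σ : ι → ι := fun p => ⟨(p.1.2, p.1.1), p.2.2.1, p.2.1, p.2.2.2.2, p.2.2.2.1⟩ with hσ
  have hfσ : ∀ p i x, f (σ p) i x = - f p i x := fun p i x =>
    psiR_swap ((hd1 p i).2.1 x) ((hd2 p i).2.1 x)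
  set m := n / D with hm
  have hm0 : 0 < m := Nat.div_pos hDn hD1
  have hm0' : (0 : ℝ) < m := by exact_mod_cast hm0
  set B : ℕ → ι → ∀ i, Set (𝒳 i) := fun k p i => {x | (k : ℝ) / m < f p i x} with hB
  have hBm : ∀ k p i, MeasurableSet (B k p i) := fun k p i =>
    measurableSet_lt measurable_const (hfm p i)
  have hG0 : 0 ≤ G := by
    rw [hGdef]
    obtain ⟨hL1, _⟩ := one_le_L hD1 hDn
    have h1 : 0 ≤ Real.log (Real.exp 1 * n) := by
      apply Real.log_nonneg
      have h2 : (1 : ℝ) ≤ n := by exact_mod_cast hn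
      have h3 : (1 : ℝ) ≤ Real.exp 1 := Real.one_le_exp (by norm_num)
      nlinarith
    have h4 : 0 ≤ Real.log 2 := Real.log_nonneg (by norm_num)
    have : 0 ≤ L := by linarith
    positivity
  -- second moments
  have hsec : ∀ p : ι, ∑ i, ∫ x, f p i x ^ 2 ∂(P i) ≤ 8 * y ^ 2 := by
    intro p
    have h1 : ∑ i, ∫ x, f p i x ^ 2 ∂(P i) ≤
        ∑ i, (4 * hellSq (μ i) (s i) (p.1.1 i) + 4 * hellSq (μ i) (s i) (p.1.2 i)) :=
      Finset.sum_le_sum fun i _ => second_moment (μ i) (hs i) (hd1 p i) (hd2 p i)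
    rw [Finset.sum_add_distrib, ← Finset.mul_sum, ← Finset.mul_sum] at h1
    have h2 := p.2.2.2.1
    have h3 := p.2.2.2.2
    unfold bH at h2 h3
    rw [Real.sqrt_le_left (by linarith)] at h2 h3
    linarith
  have hEk : ∀ k ∈ Finset.Icc 1 m, ∫ x, supAbs (empS P (B k)) x ∂Q ≤
      8 * y * Real.sqrt G * m * (1 / k) + 8 * G := by
    intro k hk
    have hk1 : 1 ≤ k := (Finset.mem_Icc.1 hk).1
    have hk0 : (0 : ℝ) < k := by exact_mod_cast hk1
    have hu : (0 : ℝ) < (k : ℝ) / m := by positivity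
    have := set_bound P (B k) (hBm k) (8 * y ^ 2 / ((k : ℝ) / m) ^ 2) G (by positivity) ?_ ?_
    · refine this.trans (le_of_eq ?_)
      have e : 2 * G * (8 * y ^ 2 / ((k : ℝ) / m) ^ 2) = (4 * y * m * (1 / k)) ^ 2 * G := by
        field_simp; ring
      rw [e, Real.sqrt_mul (by positivity), Real.sqrt_sq (by positivity)]
      ring
    · intro p
      calc ∑ i, (P i).real (B k p i) ≤ ∑ i, (∫ x, f p i x ^ 2 ∂(P i)) / ((k : ℝ) / m) ^ 2 :=
            Finset.sum_le_sum fun i _ => markov_sq (P i) (hfm p i) (hfb p i) hu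
        _ = (∑ i, ∫ x, f p i x ^ 2 ∂(P i)) / ((k : ℝ) / m) ^ 2 := by rw [Finset.sum_div]
        _ ≤ _ := by
            have := hsec p
            gcongr
    · intro x
      rw [hGdef]
      apply log_card_le hD1 hDn
      · have : (traces (B k) x).Nonempty := by
          refine ⟨Finset.univ.filter fun i => x i ∈ B k hne.some i, ?_⟩
          simp only [traces, Finset.mem_filter, Finset.mem_univ, true_and]
          exact ⟨_, rfl⟩
        exact_mod_cast this.card_pos
      · apply card_traces_le hn hd
        intro F hF
        refine traces_shatter f _ ?_ hVC ((k : ℝ) / m) x F hF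
        intro p
        exact ⟨p.1.1, hSsub p.2.1, p.1.2, hSsub p.2.2.1, rfl⟩
  -- approximation
  set A : ι → (∀ i, 𝒳 i) → ℝ := fun p x => (1 / m) * ∑ k ∈ Finset.Icc 1 m,
    ∑ i, ((B k p i).indicator (fun _ => (1 : ℝ)) (x i) -
      (B k (σ p) i).indicator (fun _ => (1 : ℝ)) (x i)) with hA
  have happ : ∀ p x, |Psi x p.1.1 p.1.2 - A p x| ≤ n * (1 / m) := by
    intro p x
    have e : Psi x p.1.1 p.1.2 - A p x = ∑ i, (f p i (x i) - (1 / m) *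
        ∑ k ∈ Finset.Icc 1 m, ((if (k : ℝ) / m < f p i (x i) then (1 : ℝ) else 0) -
          (if (k : ℝ) / m < - f p i (x i) then (1 : ℝ) else 0))) := by
      rw [Finset.sum_sub_distrib, ← Finset.mul_sum, Finset.sum_comm]
      simp only [hA, hB, Set.indicator_apply, Set.mem_ofPred_eq, hfσ]
      rfl
    rw [e]
    apply abs_sum_le_card
    intro i
    exact count_approx hm0 (hfb p i (x i))
  have hPsim : ∀ p : ι, Integrable (fun x => Psi x p.1.1 p.1.2) Q := by
    intro p
    refine Integrable.of_bound (C := n * 1) (Measurable.aestronglyMeasurable ?_) ?_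
    · apply Finset.measurable_sum
      intro i _
      exact (hfm p i).comp (measurable_pi_apply i)
    · filter_upwards with x
      exact abs_sum_le_card fun i => hfb p i (x i)
  have hindi : ∀ k p i, Integrable (fun x : ∀ i, 𝒳 i =>
      (B k p i).indicator (fun _ => (1 : ℝ)) (x i)) Q := by
    intro k p i
    refine Integrable.of_bound (C := 1) (Measurable.aestronglyMeasurable ?_) ?_
    · exact (measurable_const.indicator (hBm k p i)).comp (measurable_pi_apply i)
    · filter_upwards with x
      exact abs_ind_le _ _
  have hindint : ∀ k p i, ∫ x : ∀ i, 𝒳 i, (B k p i).indicator (fun _ => (1 : ℝ)) (x i) ∂Q =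
      (P i).real (B k p i) := by
    intro k p i
    rw [integral_comp_eval (μ := P) (f := (B k p i).indicator (fun _ => (1 : ℝ)))
      (measurable_const.indicator (hBm k p i)).aestronglyMeasurable,
      integral_indicator_const _ (hBm k p i)]
    simp
  have hsub : ∀ p k i, Integrable (fun x : ∀ i, 𝒳 i => ((B k p i).indicator (fun _ => (1 : ℝ)) (x i) -
      (B k (σ p) i).indicator (fun _ => (1 : ℝ)) (x i))) Q :=
    fun p k i => (hindi k p i).sub (hindi k (σ p) i)
  have hsub2 : ∀ p k, Integrable (fun x : ∀ i, 𝒳 i => ∑ i, ((B k p i).indicator (fun _ => (1 : ℝ)) (x i) -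
      (B k (σ p) i).indicator (fun _ => (1 : ℝ)) (x i))) Q :=
    fun p k => integrable_finsetSum _ fun i _ => hsub p k i
  have hsub3 : ∀ p, Integrable (fun x : ∀ i, 𝒳 i => ∑ k ∈ Finset.Icc 1 m, ∑ i, ((B k p i).indicator (fun _ => (1 : ℝ)) (x i) -
      (B k (σ p) i).indicator (fun _ => (1 : ℝ)) (x i))) Q :=
    fun p => integrable_finsetSum _ fun k _ => hsub2 p k
  have hAi : ∀ p, Integrable (A p) Q := fun p => (hsub3 p).const_mul _
  have hAint : ∀ p, ∫ x, A p x ∂Q = (1 / m) * ∑ k ∈ Finset.Icc 1 m,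
      ∑ i, ((P i).real (B k p i) - (P i).real (B k (σ p) i)) := by
    intro p
    simp only [hA]
    rw [integral_const_mul, integral_finsetSum _ (fun k _ => hsub2 p k)]
    congr 1
    apply Finset.sum_congr rfl
    intro k _
    rw [integral_finsetSum _ (fun i _ => hsub p k i)]
    apply Finset.sum_congr rfl
    intro i _
    rw [integral_sub (hindi k p i) (hindi k (σ p) i), hindint, hindint]
  have hAc : ∀ p x, A p x - ∫ x', A p x' ∂Q = (1 / m) * ∑ k ∈ Finset.Icc 1 m,
      (empS P (B k) p x - empS P (B k) (σ p) x) := by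
    intro p x
    rw [hAint]
    simp only [hA]
    rw [← mul_sub, ← Finset.sum_sub_distrib]
    congr 1
    apply Finset.sum_congr rfl
    intro k _
    unfold empS
    rw [← Finset.sum_sub_distrib, ← Finset.sum_sub_distrib]
    apply Finset.sum_congr rfl
    intro i _
    ring
  have hEi : ∀ k, Integrable (supAbs (empS P (B k))) Q := fun k =>
    integrable_supAbs (empS_measurable P (B k) (hBm k)) (empS_bound P (B k)) Q
  have hpt : ∀ (x : ∀ i, 𝒳 i) (p : ι), |Psi x p.1.1 p.1.2 - ∫ x', Psi x' p.1.1 p.1.2 ∂Q| ≤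
      2 * (n / m) + (1 / m) * ∑ k ∈ Finset.Icc 1 m, 2 * supAbs (empS P (B k)) x := by
    intro x p
    have h1 := happ p x
    have h2 : |∫ x', Psi x' p.1.1 p.1.2 ∂Q - ∫ x', A p x' ∂Q| ≤ n * (1 / m) := by
      rw [← integral_sub (hPsim p) (hAi p)]
      have := norm_integral_le_of_norm_le_const (μ := Q)
        (f := fun x' => Psi x' p.1.1 p.1.2 - A p x') (C := n * (1 / m))
        (by filter_upwards with x'; exact happ p x')
      simpa using this
    have h3 : |A p x - ∫ x', A p x' ∂Q| ≤
        (1 / m) * ∑ k ∈ Finset.Icc 1 m, 2 * supAbs (empS P (B k)) x := by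
      rw [hAc, abs_mul, abs_of_pos (by positivity : (0 : ℝ) < 1 / m)]
      refine mul_le_mul_of_nonneg_left ?_ (by positivity)
      refine (Finset.abs_sum_le_sum_abs _ _).trans (Finset.sum_le_sum fun k _ => ?_)
      have h4 := le_supAbs (empS_bound P (B k)) p x
      have h5 := le_supAbs (empS_bound P (B k)) (σ p) x
      refine (abs_sub _ _).trans ?_
      linarith
    have e : (n : ℝ) * (1 / m) = n / m := by ring
    rw [e] at h1 h2
    rw [abs_le] at h1 h2 h3 ⊢
    constructor <;> linarith [h1.1, h1.2, h2.1, h2.2, h3.1, h3.2]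
  have hi1 : ∀ k, Integrable (fun x : ∀ i, 𝒳 i => 2 * supAbs (empS P (B k)) x) Q :=
    fun k => (hEi k).const_mul 2
  have hi2 : Integrable (fun x : ∀ i, 𝒳 i =>
      ∑ k ∈ Finset.Icc 1 m, 2 * supAbs (empS P (B k)) x) Q :=
    integrable_finsetSum _ fun k _ => hi1 k
  have hi3 : Integrable (fun x : ∀ i, 𝒳 i =>
      (1 / m : ℝ) * ∑ k ∈ Finset.Icc 1 m, 2 * supAbs (empS P (B k)) x) Q := hi2.const_mul _
  have hfin : ∫ x, (⨆ p : ι, |Psi x p.1.1 p.1.2 - ∫ x', Psi x' p.1.1 p.1.2 ∂Q|) ∂Q ≤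
      ∫ x, (2 * (n / m) + (1 / m) * ∑ k ∈ Finset.Icc 1 m, 2 * supAbs (empS P (B k)) x) ∂Q := by
    apply integral_mono_of_nonneg
    · filter_upwards with x
      exact Real.iSup_nonneg fun _ => abs_nonneg _
    · exact (integrable_const _).add hi3
    · filter_upwards with x
      exact ciSup_le (hpt x)
  refine hfin.trans ?_
  rw [integral_add (integrable_const _) hi3, integral_const,
    integral_const_mul, integral_finsetSum _ (fun k _ => hi1 k)]
  simp only [probReal_univ, one_smul, integral_const_mul]
  have h6 : ∑ k ∈ Finset.Icc 1 m, 2 * ∫ x, supAbs (empS P (B k)) x ∂Q ≤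
      ∑ k ∈ Finset.Icc 1 m, (16 * y * Real.sqrt G * m * (1 / k) + 16 * G) := by
    apply Finset.sum_le_sum
    intro k hk
    have := hEk k hk
    linarith
  rw [Finset.sum_add_distrib, ← Finset.mul_sum, ← Finset.mul_sum, Finset.sum_const, Nat.card_Icc,
    Nat.add_sub_cancel, nsmul_eq_mul] at h6
  have h7 := sum_inv_le hD1 hDn
  have h8 := n_div_m_le hD1 hDn
  have h9 : (1 / m : ℝ) * ∑ k ∈ Finset.Icc 1 m, 2 * ∫ x, supAbs (empS P (B k)) x ∂Q ≤
      (1 / m) * (16 * y * Real.sqrt G * m * L + m * (16 * G)) := by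
    rw [← Finset.mul_sum]
    refine mul_le_mul_of_nonneg_left (h6.trans ?_) (by positivity)
    have : 0 ≤ 16 * y * Real.sqrt G * m := by positivity
    have := mul_le_mul_of_nonneg_left h7 this
    linarith
  have h10 : (1 / m : ℝ) * (16 * y * Real.sqrt G * m * L + m * (16 * G)) =
      16 * y * Real.sqrt G * L + 16 * G := by
    field_simp
  linarith

theorem statement_6
    {n : ℕ} {𝒳 : Fin n → Type*} [∀ i, MeasurableSpace (𝒳 i)]
    (μ : ∀ i, Measure (𝒳 i)) [∀ i, SigmaFinite (μ i)]
    (hn : 0 < n)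
    (Sbar S : Set (∀ i, 𝒳 i → ℝ))
    (hmodel : ∀ t ∈ Sbar, IsDensityT μ t)
    (hSsub : S ⊆ Sbar) (hScount : S.Countable)
    (d : ℕ) (hd : 1 ≤ d)
    -- the class ℱ on 𝒳̄ = ⋃ᵢ {i}×𝒳ᵢ is weak VC-major with dimension at most d
    (hVC : WeakVCMajorLE
      {f : (Σ i : Fin n, 𝒳 i) → ℝ |
        ∃ t ∈ Sbar, ∃ t' ∈ Sbar, f = fun p => psiR (t p.1 p.2) (t' p.1 p.2)} d)
    (s : ∀ i, 𝒳 i → ℝ) (hs : IsDensityT μ s) :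
    epsS μ s S ≤
      (11 * 1000 / 4) * Real.sqrt ((1 + Real.log 2 / Real.log (Real.exp 1 * n)) * (min d n : ℕ))
        * Real.log (Real.exp 1 * n / (min d n : ℕ)) ^ ((3 : ℝ) / 2) := by
  have hD1 : 1 ≤ min d n := le_min hd hn
  have hDn : min d n ≤ n := min_le_right d n
  obtain ⟨hL1, _⟩ := one_le_L hD1 hDn
  have hn1 : (1 : ℝ) ≤ n := by exact_mod_cast hn
  have hlog : 0 ≤ Real.log (Real.exp 1 * n) := by
    apply Real.log_nonneg
    have h3 : (1 : ℝ) ≤ Real.exp 1 := Real.one_le_exp (by norm_num)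
    nlinarith
  have hlog2 : 0 ≤ Real.log 2 := Real.log_nonneg (by norm_num)
  have hc : 1 ≤ 1 + Real.log 2 / Real.log (Real.exp 1 * n) := by
    have : 0 ≤ Real.log 2 / Real.log (Real.exp 1 * n) := by positivity
    linarith
  unfold epsS
  apply Real.sSup_le
  · rintro y ⟨hy1, hyw⟩
    by_contra hcon
    push Not at hcon
    have hw := wS_bound μ hn Sbar S hmodel hSsub hScount d hd hVC s hs y hy1 _ rfl
    have := final_numeric hc (by exact_mod_cast hD1) hL1 rfl hcon hw
    linarith
  · have : 0 ≤ Real.log (Real.exp 1 * n / (min d n : ℕ)) := by linarith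
    positivity

end
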